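/- Let n ≥ 5 be an integer, let C > 0, and let v be a C¹ function on the closed upper half-space {(z,t) : z ∈ ℝ^{n-1}, t ≥ 0} satisfying |v(y)| ≤ C(1+|y|)^{4-n} and |∇v(y)| ≤ C(1+|y|)^{3-n} for all y. Then ∫_{ℝ^n_+} ∇U(y) · ∇v(y) dy = (n-2) · ∫_{ℝ^{n-1}} U(z,0)^{n/(n-2)} v(z,0) dz. In particular, if ∫_{ℝ^{n-1}} U(z,0)^{n/(n-2)} v(z,0) dz = 0 then ∫_{ℝ^n_+} ∇U · ∇v dy = 0. -/

import Mathlib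

open MeasureTheory

noncomputable section

/-- Points of the upper half-space: a pair `(z, t)` with `z ∈ ℝ^{n-1}`, `t ∈ ℝ`. -/
abbrev Pt (n : ℕ) := EuclideanSpace ℝ (Fin (n - 1)) × ℝ

/-- The standard bubble `U(z,t) = ((1+t)^2 + |z|^2)^{-(n-2)/2}`. -/
def stdBubble (n : ℕ) (p : Pt n) : ℝ :=
  ((1 + p.2) ^ 2 + ‖p.1‖ ^ 2) ^ (-(((n : ℝ) - 2) / 2))

/-- Directional (partial) derivative of `f` at `x` in the direction `v`. -/
def pd {E : Type*} [NormedAddCommGroup E] [NormedSpace ℝ E]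
    (v : E) (f : E → ℝ) (x : E) : ℝ :=
  fderiv ℝ f x v

/-- The `i`-th horizontal coordinate direction. -/
def ez (n : ℕ) (i : Fin (n - 1)) : Pt n := (EuclideanSpace.single i 1, 0)

/-- The vertical (`t`) coordinate direction. -/
def et (n : ℕ) : Pt n := (0, 1)

/-- The open upper half-space. -/
def upperHalf (n : ℕ) : Set (Pt n) := {p | 0 < p.2}

/-- The closed upper half-space. -/
def closedHalf (n : ℕ) : Set (Pt n) := {p | 0 ≤ p.2}

/-- The Euclidean length `|y| = sqrt(|z|² + t²)` of `y = (z,t)`. -/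
def nrm (n : ℕ) (p : Pt n) : ℝ := Real.sqrt (‖p.1‖ ^ 2 + p.2 ^ 2)

/-! The field `v ∇U` has divergence `∇U · ∇v` because `U` is harmonic. Functions which, like `v` and
the partial derivatives of `U`, are `O((1 + |y|) ^ m)` with first derivatives
`O((1 + |y|) ^ (m - 1))` have an order `m`, and orders add under multiplication. Hence `v ∇U` has
order `m + 1 - n` when `v` has order `m`, and for `m < 0` this is enough decay for the divergence
theorem on the half-space without a contribution from infinity. The boundary term is evaluated by
`∂ₜU = -(n - 2) U ^ (n / (n - 2))` at `t = 0`. -/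

section

open Filter Asymptotics Topology Module Set

section Symbol

variable {F : Type*} [NormedAddCommGroup F] {s : Set F} {f g : F → ℝ} {a b c m m' : ℝ}

lemma isBigO_smul_one_add_norm_rpow {G : Type*} [NormedAddCommGroup G] [NormedSpace ℝ G]
    {k : F → G} (habc : a + b = c) (hf : f =O[𝓟 s] fun x => (1 + ‖x‖) ^ a)
    (hk : k =O[𝓟 s] fun x => (1 + ‖x‖) ^ b) :
    (fun x => f x • k x) =O[𝓟 s] fun x => (1 + ‖x‖) ^ c :=
  (hf.smul hk).congr_right fun x => by
    rw [smul_eq_mul, ← Real.rpow_add (by positivity), habc]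

variable [NormedSpace ℝ F]

/-- A `C¹` function on `s` of order `m`: the first-order part of the classical symbol estimates.
It packages the decay of the bubble's derivatives and of the test function. As `fderiv` is used for
the derivative, `s` is meant to be open. -/
structure IsSymbolOn (s : Set F) (m : ℝ) (f : F → ℝ) : Prop where
  contDiffOn : ContDiffOn ℝ 1 f s
  isBigO : f =O[𝓟 s] fun x => (1 + ‖x‖) ^ m
  isBigO_fderiv : fderiv ℝ f =O[𝓟 s] fun x => (1 + ‖x‖) ^ (m - 1)

namespace IsSymbolOn

lemma differentiableAt (hf : IsSymbolOn s m f) (hs : IsOpen s) {x : F} (hx : x ∈ s) :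
    DifferentiableAt ℝ f x :=
  (hf.contDiffOn.contDiffAt (hs.mem_nhds hx)).differentiableAt one_ne_zero

lemma continuousOn_fderiv_apply (hf : IsSymbolOn s m f) (hs : IsOpen s) (e : F) :
    ContinuousOn (fun x => fderiv ℝ f x e) s :=
  (hf.contDiffOn.continuousOn_fderiv_of_isOpen hs le_rfl).clm_apply continuousOn_const

lemma isBigO_fderiv_apply (hf : IsSymbolOn s m f) (e : F) :
    (fun x => fderiv ℝ f x e) =O[𝓟 s] fun x => (1 + ‖x‖) ^ (m - 1) := by
  refine IsBigO.trans (IsBigO.of_bound ‖e‖ (Eventually.of_forall fun x => ?_)) hf.isBigO_fderiv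
  rw [mul_comm]
  exact (fderiv ℝ f x).le_opNorm e

lemma const_mul (hf : IsSymbolOn s m f) (hs : IsOpen s) (c : ℝ) :
    IsSymbolOn s m fun x => c * f x where
  contDiffOn := contDiffOn_const.mul hf.contDiffOn
  isBigO := hf.isBigO.const_mul_left c
  isBigO_fderiv := by
    refine (hf.isBigO_fderiv.const_smul_left c).congr' (EqOn.eventuallyEq fun x hx => ?_) .rfl
    exact (fderiv_const_mul (hf.differentiableAt hs hx) c).symm

lemma mul (hf : IsSymbolOn s m f) (hg : IsSymbolOn s m' g) (hs : IsOpen s) :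
    IsSymbolOn s (m + m') fun x => f x * g x where
  contDiffOn := hf.contDiffOn.mul hg.contDiffOn
  isBigO := isBigO_smul_one_add_norm_rpow rfl hf.isBigO hg.isBigO
  isBigO_fderiv := by
    have hfg := isBigO_smul_one_add_norm_rpow (c := m + m' - 1) (by ring)
      hf.isBigO hg.isBigO_fderiv
    have hgf := isBigO_smul_one_add_norm_rpow (c := m + m' - 1) (by ring)
      hg.isBigO hf.isBigO_fderiv
    refine (hfg.add hgf).congr' (EqOn.eventuallyEq fun x hx => ?_) .rfl
    exact (fderiv_fun_mul (hf.differentiableAt hs hx) (hg.differentiableAt hs hx)).symm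

lemma rpow (hf : IsSymbolOn s m f) (hs : IsOpen s) (hpos : ∀ x ∈ s, 0 < f x)
    (hlow : (fun x => (1 + ‖x‖) ^ m) =O[𝓟 s] f) (r : ℝ) :
    IsSymbolOn s (m * r) fun x => f x ^ r := by
  have isBigO_rpow (q : ℝ) : (fun x => f x ^ q) =O[𝓟 s] fun x => (1 + ‖x‖) ^ (m * q) := by
    have htheta : f =Θ[𝓟 s] fun x => (1 + ‖x‖) ^ m := ⟨hf.isBigO, hlow⟩
    refine (htheta.rpow (eventually_principal.2 fun x hx => (hpos x hx).le)
      (Eventually.of_forall fun x => by positivity)).1.congr_right fun x => ?_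
    rw [Real.rpow_mul (by positivity)]
  refine ⟨hf.contDiffOn.rpow_const_of_ne fun x hx => (hpos x hx).ne', isBigO_rpow r, ?_⟩
  have hD := isBigO_smul_one_add_norm_rpow (c := m * r - 1) (by ring)
    ((isBigO_rpow (r - 1)).const_mul_left r) hf.isBigO_fderiv
  refine hD.congr' (EqOn.eventuallyEq fun x hx => ?_) .rfl
  exact ((hf.differentiableAt hs hx).hasFDerivAt.rpow_const (Or.inl (hpos x hx).ne')).fderiv.symm

end IsSymbolOn

lemma integrableOn_of_isBigO_one_add_norm_rpow [FiniteDimensional ℝ F] [MeasurableSpace F]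
    [BorelSpace F] {μ : Measure F} [μ.IsAddHaarMeasure] (hs : MeasurableSet s)
    (hf : ContinuousOn f s) (hO : f =O[𝓟 s] fun x => (1 + ‖x‖) ^ m) (hm : m < -finrank ℝ F) :
    IntegrableOn f s μ := by
  have hint : Integrable (fun x : F => (1 + ‖x‖) ^ m) μ := by
    simpa only [neg_neg] using integrable_one_add_norm (μ := μ) (lt_neg.1 hm)
  obtain ⟨c, hc⟩ := isBigO_principal.1 hO
  exact (hint.norm.const_mul c).integrableOn.mono' (hf.aestronglyMeasurable hs)
    ((ae_restrict_iff' hs).2 (.of_forall hc))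

end Symbol

lemma integral_fderiv_apply_eq_zero {E : Type*} [NormedAddCommGroup E] [NormedSpace ℝ E]
    [FiniteDimensional ℝ E] [MeasurableSpace E] [BorelSpace E] {μ : Measure E}
    [μ.IsAddHaarMeasure] {g : E → ℝ} {w : E} (hg : Differentiable ℝ g) (hint : Integrable g μ)
    (hint' : Integrable (fun x => fderiv ℝ g x w) μ) : ∫ x, fderiv ℝ g x w ∂μ = 0 := by
  simpa using integral_mul_fderiv_eq_neg_fderiv_mul_of_integrable (μ := μ) (v := w)
    (f := fun _ : E => (1 : ℝ)) (g := g) (by simp) (by simpa using hint') (by simpa using hint)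
    (fun _ _ => differentiableAt_const _) fun x _ => hg x

section HalfSpace

lemma prod_volume_restrict_setOf_snd_pos {α : Type*} [MeasurableSpace α] (μ : Measure α)
    [SFinite μ] :
    (μ.prod volume).restrict {p : α × ℝ | 0 < p.2} = μ.prod (volume.restrict (Ioi 0)) := by
  rw [show {p : α × ℝ | 0 < p.2} = univ ×ˢ Ioi 0 by ext; simp, ← Measure.prod_restrict,
    Measure.restrict_univ]

variable {E : Type*} [NormedAddCommGroup E] {f : E × ℝ → ℝ} {m : ℝ}

lemma isOpen_setOf_snd_pos : IsOpen {p : E × ℝ | 0 < p.2} :=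
  isOpen_lt continuous_const continuous_snd

lemma isBigO_horizontal_slice (hm : m ≤ 0)
    (hf : f =O[𝓟 {p | 0 < p.2}] fun p => (1 + ‖p‖) ^ m) {t : ℝ} (ht : 0 < t) :
    (fun z => f (z, t)) =O[𝓟 univ] fun z => (1 + ‖z‖) ^ m := by
  have hslice : Tendsto (fun z : E => (z, t)) (𝓟 univ) (𝓟 {p | 0 < p.2}) :=
    tendsto_principal_principal.2 fun _ _ => ht
  refine (hf.comp_tendsto hslice).trans (IsBigO.of_bound' (Eventually.of_forall fun z => ?_))
  rw [Function.comp_apply, Real.norm_of_nonneg (by positivity), Real.norm_of_nonneg (by positivity)]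
  exact Real.rpow_le_rpow_of_nonpos (by positivity) (by gcongr; exact norm_fst_le (z, t)) hm

lemma tendsto_vertical_slice_zero (hm : m < 0)
    (hf : f =O[𝓟 {p | 0 < p.2}] fun p => (1 + ‖p‖) ^ m) (z : E) :
    Tendsto (fun t => f (z, t)) atTop (𝓝 0) := by
  have hslice : Tendsto (fun t : ℝ => (z, t)) atTop (𝓟 {p | 0 < p.2}) :=
    tendsto_principal.2 (eventually_gt_atTop 0)
  refine (hf.comp_tendsto hslice).trans_tendsto ?_
  have hnorm : Tendsto (fun t : ℝ => 1 + ‖(z, t)‖) atTop atTop :=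
    tendsto_atTop_mono (fun t => (le_abs_self t).trans
      ((norm_snd_le (z, t)).trans (le_add_of_nonneg_left zero_le_one))) tendsto_id
  simpa only [Function.comp_def, neg_neg] using
    (tendsto_rpow_neg_atTop (neg_pos.2 hm)).comp hnorm

variable [NormedSpace ℝ E] [FiniteDimensional ℝ E] [MeasurableSpace E] [BorelSpace E]
  {μ : Measure E} [μ.IsAddHaarMeasure]

lemma IsSymbolOn.integrableOn_fderiv_apply (hf : IsSymbolOn {p | 0 < p.2} m f)
    (hm : m < -finrank ℝ E) (e : E × ℝ) :
    IntegrableOn (fun p => fderiv ℝ f p e) {p | 0 < p.2} (μ.prod volume) := by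
  have : (μ.prod (volume : Measure ℝ)).IsAddHaarMeasure := Measure.prod.instIsAddHaarMeasure _ _
  refine integrableOn_of_isBigO_one_add_norm_rpow isOpen_setOf_snd_pos.measurableSet
    (hf.continuousOn_fderiv_apply isOpen_setOf_snd_pos e) (hf.isBigO_fderiv_apply e) ?_
  rw [finrank_prod, finrank_self]
  push_cast
  linarith

lemma IsSymbolOn.setIntegral_fderiv_horizontal (hf : IsSymbolOn {p | 0 < p.2} m f)
    (hm : m < -finrank ℝ E) (w : E) :
    ∫ p in {p | 0 < p.2}, fderiv ℝ f p (w, 0) ∂(μ.prod volume) = 0 := by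
  have hm0 : m ≤ 0 := hm.le.trans (neg_nonpos.2 (Nat.cast_nonneg _))
  have hint := hf.integrableOn_fderiv_apply (μ := μ) hm (w, 0)
  rw [IntegrableOn, prod_volume_restrict_setOf_snd_pos] at hint
  rw [prod_volume_restrict_setOf_snd_pos, integral_prod_symm _ hint]
  refine setIntegral_eq_zero_of_forall_eq_zero fun t (ht : 0 < t) => ?_
  have hmaps : MapsTo (fun z : E => (z, t)) univ {p | 0 < p.2} := fun _ _ => ht
  have hderiv (z : E) : HasFDerivAt (fun z => f (z, t))
      ((fderiv ℝ f (z, t)).comp (.inl ℝ E ℝ)) z :=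
    (hf.differentiableAt isOpen_setOf_snd_pos (hmaps (mem_univ z))).hasFDerivAt.comp z
      (hasFDerivAt_prodMk_left z t)
  have hfderiv (z : E) : fderiv ℝ (fun z => f (z, t)) z w = fderiv ℝ f (z, t) (w, 0) := by
    rw [(hderiv z).fderiv, ContinuousLinearMap.comp_apply, ContinuousLinearMap.inl_apply]
  have hint_slice : Integrable (fun z => f (z, t)) μ := integrableOn_univ.1 <|
    integrableOn_of_isBigO_one_add_norm_rpow .univ
      (hf.contDiffOn.continuousOn.comp (by fun_prop) hmaps)
      (isBigO_horizontal_slice hm0 hf.isBigO ht) hm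
  have hint_fderiv : Integrable (fun z => fderiv ℝ f (z, t) (w, 0)) μ := integrableOn_univ.1 <|
    integrableOn_of_isBigO_one_add_norm_rpow .univ
      ((hf.continuousOn_fderiv_apply isOpen_setOf_snd_pos (w, 0)).comp (by fun_prop) hmaps)
      (isBigO_horizontal_slice (by linarith) (hf.isBigO_fderiv_apply (w, 0)) ht) (by linarith)
  simp_rw [← hfderiv] at hint_fderiv ⊢
  exact integral_fderiv_apply_eq_zero (fun z => (hderiv z).differentiableAt) hint_slice hint_fderiv

lemma IsSymbolOn.setIntegral_fderiv_vertical (hf : IsSymbolOn {p | 0 < p.2} m f)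
    (hcont : ContinuousOn f {p | 0 ≤ p.2}) (hm : m < -finrank ℝ E) :
    ∫ p in {p | 0 < p.2}, fderiv ℝ f p (0, 1) ∂(μ.prod volume) = -∫ z, f (z, 0) ∂μ := by
  have hm0 : m < 0 := hm.trans_le (neg_nonpos.2 (Nat.cast_nonneg _))
  have hint := hf.integrableOn_fderiv_apply (μ := μ) hm (0, 1)
  rw [IntegrableOn, prod_volume_restrict_setOf_snd_pos] at hint
  rw [prod_volume_restrict_setOf_snd_pos, integral_prod _ hint, ← integral_neg]
  refine integral_congr_ae ?_
  filter_upwards [hint.prod_right_ae] with z hz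
  have hcont_slice : ContinuousOn (fun t => f (z, t)) (Ici 0) :=
    hcont.comp (by fun_prop) fun _ ht => ht
  have hderiv (t : ℝ) (ht : t ∈ Ioi 0) :
      HasDerivAt (fun t => f (z, t)) (fderiv ℝ f (z, t) (0, 1)) t := by
    simpa [Function.comp_def] using
      ((hf.differentiableAt isOpen_setOf_snd_pos ht).hasFDerivAt.comp t
        (hasFDerivAt_prodMk_right z t)).hasDerivAt
  rw [integral_Ioi_of_hasDerivAt_of_tendsto (hcont_slice 0 self_mem_Ici) hderiv hz
    (tendsto_vertical_slice_zero hm0 hf.isBigO z), zero_sub]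

theorem setIntegral_divergence_halfSpace {ι : Type*} [Fintype ι] {X : ι → E × ℝ → ℝ}
    {Y : E × ℝ → ℝ} (hX : ∀ i, IsSymbolOn {p | 0 < p.2} m (X i))
    (hY : IsSymbolOn {p | 0 < p.2} m Y) (hYcont : ContinuousOn Y {p | 0 ≤ p.2})
    (hm : m < -finrank ℝ E) (w : ι → E) :
    ∫ p in {p | 0 < p.2}, ((∑ i, fderiv ℝ (X i) p (w i, 0)) + fderiv ℝ Y p (0, 1))
      ∂(μ.prod volume) = -∫ z, Y (z, 0) ∂μ := by
  have hint i := (hX i).integrableOn_fderiv_apply (μ := μ) hm (w i, 0)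
  rw [integral_add (integrable_finsetSum _ fun i _ => hint i)
      (hY.integrableOn_fderiv_apply hm (0, 1)), integral_finsetSum _ fun i _ => hint i,
    hY.setIntegral_fderiv_vertical hYcont hm,
    Finset.sum_eq_zero fun i _ => (hX i).setIntegral_fderiv_horizontal hm (w i), zero_add]

end HalfSpace

section Bubble

open scoped RealInnerProductSpace

variable {E : Type*} [NormedAddCommGroup E] {p : E × ℝ}

/-- The squared Euclidean distance from `(z, t)` to the pole `(0, -1)`, of which the bubble is a
power. -/
def poleDistSq (p : E × ℝ) : ℝ := (1 + p.2) ^ 2 + ‖p.1‖ ^ 2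

lemma poleDistSq_pos (hp : 0 ≤ p.2) : 0 < poleDistSq p := by
  unfold poleDistSq
  positivity

lemma one_add_norm_sq_le_poleDistSq (hp : 0 ≤ p.2) : (1 + ‖p‖) ^ 2 ≤ 2 * poleDistSq p := by
  have hnorm : ‖p‖ ≤ p.2 + ‖p.1‖ := by
    rw [Prod.norm_def, Real.norm_of_nonneg hp]
    exact sup_le (le_add_of_nonneg_left hp) (le_add_of_nonneg_right (norm_nonneg _))
  calc
    (1 + ‖p‖) ^ 2 ≤ (1 + p.2 + ‖p.1‖) ^ 2 := pow_le_pow_left₀ (by positivity) (by linarith) 2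
    _ ≤ 2 * poleDistSq p := add_sq_le

lemma poleDistSq_le_one_add_norm_sq (p : E × ℝ) : poleDistSq p ≤ 2 * (1 + ‖p‖) ^ 2 := by
  have hfst : ‖p.1‖ ^ 2 ≤ (1 + ‖p‖) ^ 2 := by
    gcongr
    linarith [norm_fst_le p]
  have hsnd : (1 + p.2) ^ 2 ≤ (1 + ‖p‖) ^ 2 := by
    refine sq_le_sq.2 ((abs_add_le _ _).trans (le_trans ?_ (le_abs_self _)))
    rw [abs_one]
    gcongr
    exact norm_snd_le p
  unfold poleDistSq
  linarith

variable [InnerProductSpace ℝ E]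

/-- The Euclidean inner product with `(z, t) - (0, -1)`, as a linear form; it is half the
differential of `poleDistSq`. It is spelled out because `E × ℝ` carries the sup norm. -/
def poleInner (p : E × ℝ) : E × ℝ →L[ℝ] ℝ :=
  (innerSL ℝ p.1).comp (.fst ℝ E ℝ) + (1 + p.2) • .snd ℝ E ℝ

/-- The derivative in the direction `e` of the `d`-dimensional bubble
`poleDistSq ^ (-(d - 2) / 2)`. -/
def bubblePartial (d : ℝ) (e p : E × ℝ) : ℝ :=
  (2 - d) * (poleInner p e * poleDistSq p ^ (-(d / 2)))

lemma poleInner_apply (p e : E × ℝ) : poleInner p e = ⟪p.1, e.1⟫ + (1 + p.2) * e.2 := rfl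

lemma norm_poleInner_le (p : E × ℝ) : ‖poleInner p‖ ≤ 2 * (1 + ‖p‖) := by
  refine ContinuousLinearMap.opNorm_le_bound _ (by positivity) fun e => ?_
  have hinner : |⟪p.1, e.1⟫| ≤ (1 + ‖p‖) * ‖e‖ :=
    (abs_real_inner_le_norm _ _).trans <| mul_le_mul (by linarith [norm_fst_le p])
      (norm_fst_le e) (norm_nonneg _) (by positivity)
  have hvert : |(1 + p.2) * e.2| ≤ (1 + ‖p‖) * ‖e‖ := by
    rw [abs_mul]
    gcongr
    · refine (abs_add_le _ _).trans ?_
      rw [abs_one]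
      gcongr
      exact norm_snd_le p
    · exact norm_snd_le e
  rw [poleInner_apply, Real.norm_eq_abs]
  linarith [abs_add_le ⟪p.1, e.1⟫ ((1 + p.2) * e.2)]

lemma contDiff_poleDistSq : ContDiff ℝ 1 (poleDistSq : E × ℝ → ℝ) := by
  unfold poleDistSq
  exact ((contDiff_const.add contDiff_snd).pow 2).add (contDiff_fst.norm_sq ℝ)

lemma hasFDerivAt_poleDistSq (p : E × ℝ) : HasFDerivAt poleDistSq ((2 : ℝ) • poleInner p) p := by
  have hvert : HasFDerivAt (fun q : E × ℝ => 1 + q.2) (.snd ℝ E ℝ) p := hasFDerivAt_snd.const_add 1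
  refine ((hvert.pow 2).add (hasFDerivAt_fst (p := p)).norm_sq).congr_fderiv ?_
  ext e <;> simp [poleInner_apply, mul_add]

lemma hasFDerivAt_poleInner_apply (e p : E × ℝ) :
    HasFDerivAt (fun q => poleInner q e) ((innerSL ℝ e.1).comp (.fst ℝ E ℝ) + e.2 • .snd ℝ E ℝ)
      p := by
  have hlin := (((innerSL ℝ e.1).comp (.fst ℝ E ℝ)) + e.2 • .snd ℝ E ℝ).hasFDerivAt (x := p)
  refine (hlin.add_const e.2).congr_of_eventuallyEq (Eventually.of_forall fun q => ?_)
  simp only [poleInner_apply, add_apply, ContinuousLinearMap.comp_apply,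
    ContinuousLinearMap.coe_fst', ContinuousLinearMap.coe_snd', smul_apply, innerSL_apply_apply,
    real_inner_comm, smul_eq_mul]
  ring

lemma hasFDerivAt_poleDistSq_rpow (hp : 0 ≤ p.2) (r : ℝ) :
    HasFDerivAt (fun q => poleDistSq q ^ r) ((2 * r * poleDistSq p ^ (r - 1)) • poleInner p) p := by
  refine ((hasFDerivAt_poleDistSq p).rpow_const (Or.inl (poleDistSq_pos hp).ne')).congr_fderiv ?_
  rw [smul_smul]
  congr 1
  ring

lemma pd_bubblePartial (hp : 0 ≤ p.2) (d : ℝ) (e : E × ℝ) :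
    pd e (bubblePartial d e) p = (2 - d) * ((‖e.1‖ ^ 2 + e.2 ^ 2) * poleDistSq p ^ (-(d / 2))
      - d * poleInner p e ^ 2 * poleDistSq p ^ (-(d / 2) - 1)) := by
  have hderiv : HasFDerivAt (bubblePartial d e) _ p := ((hasFDerivAt_poleInner_apply e p).mul
    (hasFDerivAt_poleDistSq_rpow hp (-(d / 2)))).const_mul (2 - d)
  rw [pd, hderiv.fderiv]
  simp only [add_apply, smul_apply, smul_eq_mul, ContinuousLinearMap.comp_apply,
    ContinuousLinearMap.coe_fst', ContinuousLinearMap.coe_snd', innerSL_apply_apply,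
    real_inner_self_eq_norm_sq]
  ring

lemma divergence_bubblePartial_eq_zero {ι : Type*} [Fintype ι] (b : OrthonormalBasis ι ℝ E)
    (hp : 0 ≤ p.2) {d : ℝ} (hd : d = Fintype.card ι + 1) :
    (∑ i, pd (b i, 0) (bubblePartial d (b i, 0)) p) + pd (0, 1) (bubblePartial d (0, 1)) p = 0 := by
  have hparseval : ∑ i, ⟪p.1, b i⟫ ^ 2 = ‖p.1‖ ^ 2 := b.sum_sq_inner_left p.1
  have hpow : poleDistSq p ^ (-(d / 2)) = poleDistSq p * poleDistSq p ^ (-(d / 2) - 1) := by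
    rw [Real.rpow_sub_one (poleDistSq_pos hp).ne', mul_div_cancel₀ _ (poleDistSq_pos hp).ne']
  simp only [pd_bubblePartial hp, poleInner_apply, b.norm_eq_one, mul_zero, add_zero, norm_zero,
    inner_zero_right, mul_one, ← Finset.mul_sum, Finset.sum_sub_distrib, ← Finset.sum_mul,
    hparseval, Finset.sum_const, Finset.card_univ, nsmul_eq_mul, hpow]
  rw [hd]
  unfold poleDistSq
  ring

lemma continuousOn_bubblePartial (d : ℝ) (e : E × ℝ) :
    ContinuousOn (bubblePartial d e) {p | 0 ≤ p.2} := fun p hp =>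
  ((((hasFDerivAt_poleInner_apply e p).mul (hasFDerivAt_poleDistSq_rpow hp _)).const_mul
    (2 - d)).continuousAt).continuousWithinAt

lemma isSymbolOn_poleInner_apply (s : Set (E × ℝ)) (e : E × ℝ) :
    IsSymbolOn s 1 fun p => poleInner p e where
  contDiffOn :=
    ((contDiff_fst.inner ℝ contDiff_const).add
      ((contDiff_const.add contDiff_snd).mul contDiff_const)).contDiffOn
  isBigO := by
    refine IsBigO.of_bound (2 * ‖e‖) (Eventually.of_forall fun p => ?_)
    rw [Real.rpow_one, Real.norm_of_nonneg (by positivity : 0 ≤ 1 + ‖p‖), mul_right_comm]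
    exact (poleInner p).le_of_opNorm_le (norm_poleInner_le p) e
  isBigO_fderiv := by
    rw [show fderiv ℝ (fun p => poleInner p e) = fun _ => _ from
      funext fun p => (hasFDerivAt_poleInner_apply e p).fderiv]
    simp only [sub_self, Real.rpow_zero]
    exact isBigO_const_const _ one_ne_zero _

lemma isSymbolOn_poleDistSq (s : Set (E × ℝ)) : IsSymbolOn s 2 (poleDistSq : E × ℝ → ℝ) where
  contDiffOn := contDiff_poleDistSq.contDiffOn
  isBigO := by
    refine IsBigO.of_bound 2 (Eventually.of_forall fun p => ?_)
    rw [Real.rpow_two, Real.norm_of_nonneg (by unfold poleDistSq; positivity),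
      Real.norm_of_nonneg (by positivity)]
    exact poleDistSq_le_one_add_norm_sq p
  isBigO_fderiv := by
    refine IsBigO.of_bound 4 (Eventually.of_forall fun p => ?_)
    rw [(hasFDerivAt_poleDistSq p).fderiv, norm_smul, Real.norm_two,
      show (2 : ℝ) - 1 = 1 by norm_num, Real.rpow_one,
      Real.norm_of_nonneg (by positivity : 0 ≤ 1 + ‖p‖)]
    linarith [norm_poleInner_le p]

lemma isSymbolOn_bubblePartial (d : ℝ) (e : E × ℝ) :
    IsSymbolOn {p | 0 < p.2} (1 - d) (bubblePartial d e) := by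
  have hlow : (fun p : E × ℝ => (1 + ‖p‖) ^ (2 : ℝ)) =O[𝓟 {p | 0 < p.2}] poleDistSq := by
    refine IsBigO.of_bound 2 (eventually_principal.2 fun p (hp : 0 < p.2) => ?_)
    rw [Real.rpow_two, Real.norm_of_nonneg (by positivity),
      Real.norm_of_nonneg (poleDistSq_pos hp.le).le]
    exact one_add_norm_sq_le_poleDistSq hp.le
  have hpow := (isSymbolOn_poleDistSq _).rpow isOpen_setOf_snd_pos
    (fun p hp => poleDistSq_pos (le_of_lt hp)) hlow (-(d / 2))
  have hmul := ((isSymbolOn_poleInner_apply _ e).mul hpow isOpen_setOf_snd_pos).const_mul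
    isOpen_setOf_snd_pos (2 - d)
  rwa [show 1 + 2 * -(d / 2) = 1 - d by ring] at hmul

end Bubble

section StdBubble

variable {n : ℕ} {p : Pt n} {v : Pt n → ℝ} {m : ℝ}

lemma pd_stdBubble (hp : 0 ≤ p.2) (e : Pt n) : pd e (stdBubble n) p = bubblePartial n e p := by
  have hU := (hasFDerivAt_poleDistSq_rpow hp (-(((n : ℝ) - 2) / 2))).fderiv
  have hexp : -(((n : ℝ) - 2) / 2) - 1 = -((n : ℝ) / 2) := by ring
  rw [hexp] at hU
  rw [pd, bubblePartial, show stdBubble n = fun q => poleDistSq q ^ (-(((n : ℝ) - 2) / 2)) from rfl,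
    hU, smul_apply, smul_eq_mul]
  ring

lemma bubblePartial_et_boundary (hn : n ≠ 2) (z : EuclideanSpace ℝ (Fin (n - 1))) :
    bubblePartial n (et n) (z, 0) =
      -(((n : ℝ) - 2) * stdBubble n (z, 0) ^ ((n : ℝ) / ((n : ℝ) - 2))) := by
  have hn2 : (n : ℝ) - 2 ≠ 0 := sub_ne_zero.2 (mod_cast hn)
  have hexp : -(((n : ℝ) - 2) / 2) * (n / (n - 2)) = -((n : ℝ) / 2) := by field_simp
  rw [stdBubble, ← Real.rpow_mul (by positivity), hexp]
  simp only [bubblePartial, poleInner_apply, poleDistSq, et, inner_zero_right, add_zero, one_pow,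
    mul_one, zero_add, one_mul]
  ring

lemma grad_stdBubble_dot_grad_eq_divergence (hn : 1 ≤ n) (hp : p ∈ upperHalf n)
    (hv : DifferentiableAt ℝ v p) :
    (∑ i, pd (ez n i) (stdBubble n) p * pd (ez n i) v p) +
        pd (et n) (stdBubble n) p * pd (et n) v p =
      (∑ i, pd (ez n i) (fun q => v q * bubblePartial n (ez n i) q) p) +
        pd (et n) (fun q => v q * bubblePartial n (et n) q) p := by
  have hp0 : 0 ≤ p.2 := le_of_lt hp
  have hprod (e : Pt n) : pd e (fun q => v q * bubblePartial n e q) p =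
      v p * pd e (bubblePartial n e) p + pd e (stdBubble n) p * pd e v p := by
    have hU := (isSymbolOn_bubblePartial (n : ℝ) e).differentiableAt isOpen_setOf_snd_pos hp
    rw [pd_stdBubble hp0, pd, fderiv_fun_mul hv hU]
    rfl
  have hharm : (∑ i, pd (ez n i) (bubblePartial n (ez n i)) p) +
      pd (et n) (bubblePartial n (et n)) p = 0 := by
    simpa only [EuclideanSpace.basisFun_apply, ez, et] using
      divergence_bubblePartial_eq_zero (EuclideanSpace.basisFun (Fin (n - 1)) ℝ) hp0
        (d := n) (by rw [Fintype.card_fin, Nat.cast_sub hn]; ring)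
  simp only [hprod, Finset.sum_add_distrib, ← Finset.mul_sum]
  linear_combination -v p * hharm

lemma norm_le_nrm (p : Pt n) : ‖p‖ ≤ nrm n p := by
  rw [Prod.norm_def, sup_le_iff]
  exact ⟨Real.le_sqrt_of_sq_le (le_add_of_nonneg_right (sq_nonneg _)),
    Real.le_sqrt_of_sq_le (by
      rw [Real.norm_eq_abs, sq_abs]
      exact le_add_of_nonneg_left (sq_nonneg _))⟩

lemma isBigO_one_add_norm_rpow_of_nrm_bound {G : Type*} [NormedAddCommGroup G] {k : Pt n → G}
    {s : Set (Pt n)} {C : ℝ} (hm : m ≤ 0) (hk : ∀ p ∈ s, ‖k p‖ ≤ C * (1 + nrm n p) ^ m) :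
    k =O[𝓟 s] fun p => (1 + ‖p‖) ^ m := by
  have hnrm (p : Pt n) : 0 ≤ nrm n p := Real.sqrt_nonneg _
  have hk' : k =O[𝓟 s] fun p => (1 + nrm n p) ^ m := isBigO_principal.2 ⟨C, fun p hp => by
    rw [Real.norm_of_nonneg (Real.rpow_nonneg (by linarith [hnrm p]) m)]
    exact hk p hp⟩
  refine hk'.trans (IsBigO.of_bound' (Eventually.of_forall fun p => ?_))
  rw [Real.norm_of_nonneg (Real.rpow_nonneg (by linarith [hnrm p]) m),
    Real.norm_of_nonneg (by positivity)]
  exact Real.rpow_le_rpow_of_nonpos (by positivity) (by gcongr; exact norm_le_nrm p) hm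

lemma isSymbolOn_upperHalf_of_nrm_bounds {C : ℝ} (hm : m ≤ 0)
    (hreg : ContDiffOn ℝ 1 v (closedHalf n))
    (hv : ∀ p ∈ closedHalf n, |v p| ≤ C * (1 + nrm n p) ^ m)
    (hdv : ∀ p ∈ closedHalf n,
      ‖iteratedFDerivWithin ℝ 1 v (closedHalf n) p‖ ≤ C * (1 + nrm n p) ^ (m - 1)) :
    IsSymbolOn (upperHalf n) m v := by
  have hsub : upperHalf n ⊆ closedHalf n := fun p (hp : 0 < p.2) => le_of_lt hp
  refine ⟨hreg.mono hsub, isBigO_one_add_norm_rpow_of_nrm_bound hm fun p hp => hv p (hsub hp),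
    isBigO_one_add_norm_rpow_of_nrm_bound (C := C) (by linarith) fun p hp => ?_⟩
  have hnhds : closedHalf n ∈ 𝓝 p := mem_of_superset (isOpen_setOf_snd_pos.mem_nhds hp) hsub
  rw [← fderivWithin_of_mem_nhds hnhds,
    ← norm_iteratedFDerivWithin_one _ (uniqueDiffWithinAt_of_mem_nhds hnhds)]
  exact hdv p (hsub hp)

end StdBubble

end

theorem stmt11_general {n : ℕ} (hn : 3 ≤ n) {m : ℝ} (hm : m < 0) {v : Pt n → ℝ}
    (hcont : ContinuousOn v (closedHalf n)) (hv : IsSymbolOn (upperHalf n) m v) :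
    (∫ p in upperHalf n,
        ((∑ i : Fin (n - 1), pd (ez n i) (stdBubble n) p * pd (ez n i) v p) +
          pd (et n) (stdBubble n) p * pd (et n) v p)) =
      ((n : ℝ) - 2) *
        ∫ z : EuclideanSpace ℝ (Fin (n - 1)),
          (stdBubble n (z, 0)) ^ ((n : ℝ) / ((n : ℝ) - 2)) * v (z, 0) := by
  have hfield (e : Pt n) :
      IsSymbolOn (upperHalf n) (m + (1 - n)) fun p => v p * bubblePartial n e p :=
    hv.mul (isSymbolOn_bubblePartial n e) isOpen_setOf_snd_pos
  have horder : m + (1 - n) < -Module.finrank ℝ (EuclideanSpace ℝ (Fin (n - 1))) := by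
    rw [finrank_euclideanSpace_fin, Nat.cast_sub (by lia)]
    push_cast
    linarith
  calc
    _ = ∫ p in upperHalf n, ((∑ i, pd (ez n i) (fun q => v q * bubblePartial n (ez n i) q) p) +
          pd (et n) (fun q => v q * bubblePartial n (et n) q) p) :=
      setIntegral_congr_fun isOpen_setOf_snd_pos.measurableSet fun p hp =>
        grad_stdBubble_dot_grad_eq_divergence (by lia) hp
          (hv.differentiableAt isOpen_setOf_snd_pos hp)
    _ = -∫ z, v (z, 0) * bubblePartial n (et n) (z, 0) :=
      setIntegral_divergence_halfSpace (fun i => hfield (ez n i)) (hfield (et n))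
        (hcont.mul (continuousOn_bubblePartial n (et n))) horder
        fun i => EuclideanSpace.single i 1
    _ = _ := by
      rw [← integral_neg, ← integral_const_mul]
      refine integral_congr_ae (.of_forall fun z => ?_)
      simp only [bubblePartial_et_boundary (show n ≠ 2 by lia) z]
      ring

/-- for a decaying `C¹` function `v` on the closed half-space,
`∫_{ℝ^n_+} ∇U·∇v = (n-2) ∫_{ℝ^{n-1}} U(z,0)^{n/(n-2)} v(z,0) dz`; in particular
the left side vanishes when the boundary integral does. -/
theorem stmt11 (n : ℕ) (hn : 5 ≤ n) (C : ℝ) (hC : 0 < C) (v : Pt n → ℝ)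
    (hreg : ContDiffOn ℝ 1 v (closedHalf n))
    (hv : ∀ p ∈ closedHalf n, |v p| ≤ C * (1 + nrm n p) ^ ((4 : ℝ) - (n : ℝ)))
    (hdv : ∀ p ∈ closedHalf n,
      ‖iteratedFDerivWithin ℝ 1 v (closedHalf n) p‖ ≤
        C * (1 + nrm n p) ^ ((3 : ℝ) - (n : ℝ))) :
    (∫ p in upperHalf n,
        ((∑ i : Fin (n - 1), pd (ez n i) (stdBubble n) p * pd (ez n i) v p) +
          pd (et n) (stdBubble n) p * pd (et n) v p)) =
      ((n : ℝ) - 2) *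
        ∫ z : EuclideanSpace ℝ (Fin (n - 1)),
          (stdBubble n (z, 0)) ^ ((n : ℝ) / ((n : ℝ) - 2)) * v (z, 0) ∧
    ((∫ z : EuclideanSpace ℝ (Fin (n - 1)),
        (stdBubble n (z, 0)) ^ ((n : ℝ) / ((n : ℝ) - 2)) * v (z, 0)) = 0 →
      (∫ p in upperHalf n,
        ((∑ i : Fin (n - 1), pd (ez n i) (stdBubble n) p * pd (ez n i) v p) +
          pd (et n) (stdBubble n) p * pd (et n) v p)) = 0) := by
  have hn4 : (4 : ℝ) - n < 0 := sub_neg.2 (mod_cast hn)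
  have key := stmt11_general (by lia) hn4 hreg.continuousOn
    (isSymbolOn_upperHalf_of_nrm_bounds hn4.le hreg hv (by convert hdv using 5; ring))
  exact ⟨key, fun h => by rw [key, h, mul_zero]⟩
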